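/- In the plane, let a and g be nonzero vectors with angle φ between them, where π/2 − Δ < φ, and let p' = g + α a with α = (‖g‖/‖a‖)(sin φ tan Δ − cos φ). Then the angle between a and p' equals π/2 − Δ. -/

import Mathlib

open Real RealInnerProductSpace InnerProductGeometry

/-!
Write `g = n + (‖g‖ / ‖a‖ * cos φ) • a` with `n` orthogonal to `a`, so that `‖n‖ = ‖g‖ * sin φ`.
The cosine term of `α` cancels the component of `g` along `a`, leaving
`p' = n + (‖n‖ * tan Δ / ‖a‖) • a`: a right triangle with legs `‖n‖` and `‖n‖ * tan Δ`, in which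
`p'` is tilted by `Δ` from `n` towards `a`.
-/

section

variable {V : Type*} [NormedAddCommGroup V] [InnerProductSpace ℝ V]

theorem norm_add_smul_of_inner_eq_zero {a n : V} (han : ⟪a, n⟫ = 0) (hn : n ≠ 0) (t : ℝ) :
    ‖n + t • a‖ = ‖n‖ * √(1 + (t * ‖a‖ / ‖n‖) ^ 2) := by
  have hn' : ‖n‖ ≠ 0 := norm_ne_zero_iff.mpr hn
  have horth : ⟪n, t • a⟫ = 0 := by rw [inner_smul_right, real_inner_comm, han, mul_zero]
  have hsq : ‖n + t • a‖ ^ 2 = ‖n‖ ^ 2 * (1 + (t * ‖a‖ / ‖n‖) ^ 2) := by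
    rw [norm_add_sq_real, horth, norm_smul, mul_pow, norm_eq_abs, sq_abs]
    field_simp
    ring
  rw [← sqrt_sq (norm_nonneg (n + t • a)), hsq, sqrt_mul (sq_nonneg _), sqrt_sq (norm_nonneg n)]

theorem angle_add_smul_of_inner_eq_zero {a n : V} (han : ⟪a, n⟫ = 0) (hn : n ≠ 0) (t : ℝ) :
    angle a (n + t • a) = π / 2 - arctan (t * ‖a‖ / ‖n‖) := by
  rcases eq_or_ne a 0 with rfl | ha
  · simp
  have ha' : ‖a‖ ≠ 0 := norm_ne_zero_iff.mpr ha
  have hinner : ⟪a, n + t • a⟫ = t * ‖a‖ ^ 2 := by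
    rw [inner_add_right, han, zero_add, inner_smul_right, real_inner_self_eq_norm_sq]
  rw [angle, hinner, norm_add_smul_of_inner_eq_zero han hn, arccos_eq_pi_div_two_sub_arcsin,
    arctan_eq_arcsin]
  congr 2
  field_simp

theorem inner_sub_cos_angle_smul_eq_zero (a g : V) :
    ⟪a, g - (‖g‖ / ‖a‖ * cos (angle a g)) • a⟫ = 0 := by
  rw [inner_sub_right, inner_smul_right, real_inner_self_eq_norm_sq,
    ← cos_angle_mul_norm_mul_norm a g]
  field_simp
  ring

theorem norm_sub_cos_angle_smul (a g : V) :
    ‖g - (‖g‖ / ‖a‖ * cos (angle a g)) • a‖ = ‖g‖ * sin (angle a g) := by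
  rcases eq_or_ne a 0 with rfl | ha
  · simp
  have ha' : ‖a‖ ≠ 0 := norm_ne_zero_iff.mpr ha
  rw [← sq_eq_sq₀ (norm_nonneg _) (mul_nonneg (norm_nonneg g) (sin_angle_nonneg a g)),
    norm_sub_sq_real, inner_smul_right, real_inner_comm, ← cos_angle_mul_norm_mul_norm a g,
    norm_smul, mul_pow, norm_eq_abs, sq_abs, mul_pow ‖g‖, sin_sq]
  field_simp
  ring

theorem cone_projection_direction_general {a g : V} {Δ : ℝ} (ha : a ≠ 0) (hg : g ≠ 0)
    (hΔ₁ : -(π / 2) < Δ) (hΔ₂ : Δ < π / 2) (hφ₀ : angle a g ≠ 0) (hφπ : angle a g ≠ π) :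
    angle a (g + (‖g‖ / ‖a‖ * (sin (angle a g) * tan Δ - cos (angle a g))) • a) = π / 2 - Δ := by
  have ha' : ‖a‖ ≠ 0 := norm_ne_zero_iff.mpr ha
  have hg' : ‖g‖ ≠ 0 := norm_ne_zero_iff.mpr hg
  have hsin : sin (angle a g) ≠ 0 := fun h ↦
    (sin_eq_zero_iff_angle_eq_zero_or_angle_eq_pi.mp h).elim hφ₀ hφπ
  set n := g - (‖g‖ / ‖a‖ * cos (angle a g)) • a with hn_def
  have hn_norm : ‖n‖ = ‖g‖ * sin (angle a g) := norm_sub_cos_angle_smul a g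
  have hn : n ≠ 0 := norm_ne_zero_iff.mp (hn_norm ▸ mul_ne_zero hg' hsin)
  have hsplit : g + (‖g‖ / ‖a‖ * (sin (angle a g) * tan Δ - cos (angle a g))) • a =
      n + (‖n‖ * tan Δ / ‖a‖) • a := by
    rw [hn_norm, hn_def]
    module
  have hslope : ‖n‖ * tan Δ / ‖a‖ * ‖a‖ / ‖n‖ = tan Δ := by
    have hn' : ‖n‖ ≠ 0 := norm_ne_zero_iff.mpr hn
    field_simp
  rw [hsplit, angle_add_smul_of_inner_eq_zero (inner_sub_cos_angle_smul_eq_zero a g) hn, hslope,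
    arctan_tan hΔ₁ hΔ₂]

end

/-- Direction step of the cone-projection derivation: the vector
`p' = g + α a` with `α = (‖g‖/‖a‖)(sin φ tan Δ − cos φ)` makes angle `π/2 − Δ` with `a`. -/
theorem cone_projection_direction {a g : EuclideanSpace ℝ (Fin 2)} (Δ φ : ℝ)
    (ha : a ≠ 0) (hg : g ≠ 0) (hΔ0 : 0 ≤ Δ) (hΔ1 : Δ < π / 2)
    (hφ : φ = angle a g) (hφ1 : π / 2 - Δ < φ) (hφ2 : φ < π) :
    angle a (g + ((‖g‖ / ‖a‖) * (Real.sin φ * Real.tan Δ - Real.cos φ)) • a) = π / 2 - Δ := by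
  subst hφ
  exact cone_projection_direction_general ha hg (by linarith) hΔ1
    (by linarith) hφ2.ne
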